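/- arXiv:2403.08168 — 4 statements merged into one kernel-verified Lean document; each statement's English description precedes it below -/
import Mathlib

section
/- Let Δ > 0 and let τ be uniformly distributed on [-Δ/2, Δ/2]. Then for every a ∈ ℝ, the expectation of the floor satisfies E_τ[⌊(a+τ)/Δ⌋] = a/Δ - 1/2. -/
open MeasureTheory

/-- The uniform probability measure on the interval `[-Δ/2, Δ/2]`. -/
noncomputable def uniformDither (Δ : ℝ) : Measure ℝ :=
  (ENNReal.ofReal Δ)⁻¹ • volume.restrict (Set.Icc (-(Δ / 2)) (Δ / 2))

/-- For `τ` uniform on `[-Δ/2, Δ/2]`, `E_τ[⌊(a+τ)/Δ⌋] = a/Δ - 1/2`. -/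
theorem floor_dither_expectation (Δ : ℝ) (hΔ : 0 < Δ) (a : ℝ) :
    ∫ τ, ((⌊(a + τ) / Δ⌋ : ℤ) : ℝ) ∂(uniformDither Δ) = a / Δ - 1 / 2 := by
  have hf : ∀ c d : ℝ, IntervalIntegrable (fun u : ℝ => Int.fract u) volume c d := by
    intro c d
    refine (intervalIntegrable_const (c := (1 : ℝ))).mono_fun
      (measurable_fract.aestronglyMeasurable) (Filter.Eventually.of_forall fun x => ?_)
    simp only [Real.norm_eq_abs, abs_one]
    rw [abs_of_nonneg (Int.fract_nonneg x)]
    exact (Int.fract_lt_one x).le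
  have h01 : ∫ u in (0 : ℝ)..1, Int.fract u = 1 / 2 := by
    have : ∫ u in (0 : ℝ)..1, Int.fract u = ∫ u in (0 : ℝ)..1, u := by
      rw [intervalIntegral.integral_of_le zero_le_one, intervalIntegral.integral_of_le zero_le_one,
        ← integral_Ico_eq_integral_Ioc, ← integral_Ico_eq_integral_Ioc]
      exact setIntegral_congr_fun measurableSet_Ico fun x hx => Int.fract_eq_self.2 hx
    rw [this, integral_id]
    norm_num
  have hper : ∀ c : ℝ, ∫ u in c..(c + 1), Int.fract u = 1 / 2 := by
    intro c
    have hp : Function.Periodic (fun u : ℝ => Int.fract u) 1 := fun x => Int.fract_add_one x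
    have := hp.intervalIntegral_add_eq c 0
    rw [this, zero_add, h01]
  have hfl : ∀ c : ℝ, ∫ u in c..(c + 1), ((⌊u⌋ : ℤ) : ℝ) = c := by
    intro c
    have h1 : ∀ u : ℝ, ((⌊u⌋ : ℤ) : ℝ) = u - Int.fract u := fun u => (Int.self_sub_fract u).symm
    simp_rw [h1]
    rw [intervalIntegral.integral_sub intervalIntegral.intervalIntegrable_id (hf _ _), hper,
      integral_id]
    ring
  have hle : -(Δ / 2) ≤ Δ / 2 := by linarith
  unfold uniformDither
  rw [integral_smul_measure, integral_Icc_eq_integral_Ioc, ← intervalIntegral.integral_of_le hle,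
    ENNReal.toReal_inv, ENNReal.toReal_ofReal hΔ.le]
  have h2 : ∀ τ : ℝ, (a + τ) / Δ = τ / Δ + a / Δ := fun τ => by ring
  simp_rw [h2]
  rw [intervalIntegral.inv_smul_integral_comp_div_add (fun u : ℝ => ((⌊u⌋ : ℤ) : ℝ))]
  have e1 : -(Δ / 2) / Δ + a / Δ = a / Δ - 1 / 2 := by field_simp; ring
  have e2 : Δ / 2 / Δ + a / Δ = (a / Δ - 1 / 2) + 1 := by field_simp; ring
  rw [e1, e2, hfl]
end

section
/- Let Δ > 0 and let τ be uniformly distributed on [-Δ/2, Δ/2]. Then for every a ∈ ℝ, the dithered uniform quantizer is unbiased: E_τ[Q_Δ(a+τ)] = a. -/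
open MeasureTheory

/-- The uniform quantizer `Q_Δ(t) = Δ(⌊t/Δ⌋ + 1/2)`. -/
noncomputable def uniformQuantizer (Δ : ℝ) (t : ℝ) : ℝ :=
  Δ * ((⌊t / Δ⌋ : ℤ) + 1 / 2)

/-- For `τ` uniform on `[-Δ/2, Δ/2]`, the dithered uniform quantizer is unbiased:
`E_τ[Q_Δ(a+τ)] = a`. -/
theorem dithered_quantizer_unbiased (Δ : ℝ) (hΔ : 0 < Δ) (a : ℝ) :
    ∫ τ, uniformQuantizer Δ (a + τ) ∂(uniformDither Δ) = a := by
  have hΔ' : Δ ≠ 0 := hΔ.ne'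
  set g : ℝ → ℝ := fun t => Δ / 2 - Δ * Int.fract (t / Δ) with hg
  have hQ : ∀ t, uniformQuantizer Δ t = t + g t := by
    intro t
    have h : t = Δ * (t / Δ) := by field_simp
    have h2 := Int.floor_add_fract (t / Δ)
    simp only [uniformQuantizer, hg]
    have h3 : Δ * (⌊t / Δ⌋ : ℝ) + Δ * Int.fract (t / Δ) = t := by
      rw [← mul_add, h2, ← h]
    linarith
  have hper : Function.Periodic g Δ := by
    intro t
    have : (t + Δ) / Δ = t / Δ + 1 := by field_simp
    simp only [hg, this, Int.fract_add_one]
  have hmeas : Measurable g := by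
    simp only [hg]
    exact measurable_const.sub
      (measurable_const.mul (measurable_fract.comp (measurable_id.div_const Δ)))
  have hint : ∀ x y, IntervalIntegrable g volume x y := by
    intro x y
    refine (intervalIntegrable_const (c := 2 * Δ)).mono_fun hmeas.aestronglyMeasurable ?_
    refine Filter.Eventually.of_forall fun t => ?_
    have h0 := Int.fract_nonneg (t / Δ)
    have h1 := (Int.fract_lt_one (t / Δ)).le
    simp only [hg, Real.norm_eq_abs]
    rw [abs_of_pos (by positivity : 0 < 2 * Δ), abs_le]
    constructor <;> nlinarith
  have hzero : ∫ t in (0 : ℝ)..(0 + Δ), g t = 0 := by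
    have : ∫ t in (0 : ℝ)..(0 + Δ), g t = ∫ t in (0 : ℝ)..(0 + Δ), (Δ / 2 - t) := by
      apply intervalIntegral.integral_congr_ae
      have hne : ∀ᵐ t : ℝ, t ≠ Δ := by simp [ae_iff]
      filter_upwards [hne] with t ht hmem
      rw [Set.uIoc_of_le (by linarith), zero_add] at hmem
      have hlt : t < Δ := lt_of_le_of_ne hmem.2 ht
      have : Int.fract (t / Δ) = t / Δ :=
        Int.fract_eq_self.2 ⟨div_nonneg hmem.1.le hΔ.le, (div_lt_one hΔ).2 hlt⟩
      simp only [hg, this]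
      field_simp
    rw [this, intervalIntegral.integral_sub (by simp) (by simp)]
    simp
    ring
  have hshift : ∫ t in (a + -(Δ / 2))..(a + Δ / 2), g t = 0 := by
    have h := hper.intervalIntegral_add_eq (a + -(Δ / 2)) 0
    rw [hzero] at h
    rw [← h]
    congr 1
    ring
  have key : ∫ τ in (-(Δ / 2))..(Δ / 2), uniformQuantizer Δ (a + τ) = Δ * a := by
    rw [intervalIntegral.integral_comp_add_left (fun t => uniformQuantizer Δ t) a]
    simp only [hQ]
    rw [intervalIntegral.integral_add (by simp) (hint _ _), hshift]
    simp
    ring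
  rw [uniformDither, integral_smul_measure, integral_Icc_eq_integral_Ioc,
    ← intervalIntegral.integral_of_le (by linarith), key, ENNReal.toReal_inv,
    ENNReal.toReal_ofReal hΔ.le, smul_eq_mul]
  field_simp
end

section
/- Let Δ > 0 and let τ be uniformly distributed on [-Δ/2, Δ/2]. Then for all a, b ∈ ℝ, E_τ[|Q_Δ(a+τ) - Q_Δ(b+τ)|] = |a - b|. -/
open MeasureTheory

lemma uq_mono (Δ : ℝ) (hΔ : 0 < Δ) : Monotone (uniformQuantizer Δ) := by
  intro s t hst
  unfold uniformQuantizer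
  have : (⌊s / Δ⌋ : ℝ) ≤ ⌊t / Δ⌋ := by
    exact_mod_cast Int.floor_le_floor (div_le_div_of_nonneg_right hst hΔ.le)
  exact mul_le_mul_of_nonneg_left (by linarith) hΔ.le

lemma uq_periodic (Δ : ℝ) (hΔ : 0 < Δ) :
    Function.Periodic (fun t => t - uniformQuantizer Δ t) Δ := by
  intro t
  simp only [uniformQuantizer]
  rw [add_div, div_self hΔ.ne', Int.floor_add_one]
  push_cast
  ring

lemma uq_int (Δ : ℝ) (hΔ : 0 < Δ) (a : ℝ) :
    IntervalIntegrable (fun τ => uniformQuantizer Δ (a + τ)) volume (-(Δ/2)) (Δ/2) :=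
  Monotone.intervalIntegrable fun _ _ h => uq_mono Δ hΔ (by linarith)

lemma uq_integral (Δ : ℝ) (hΔ : 0 < Δ) (a : ℝ) :
    ∫ τ in (-(Δ/2))..(Δ/2), uniformQuantizer Δ (a + τ)
      = Δ * a - ∫ t in (0:ℝ)..(0 + Δ), (t - uniformQuantizer Δ t) := by
  have h1 : ∫ τ in (-(Δ/2))..(Δ/2), ((a + τ) - uniformQuantizer Δ (a + τ))
      = ∫ t in (0:ℝ)..(0 + Δ), (t - uniformQuantizer Δ t) := by
    rw [intervalIntegral.integral_comp_add_left (fun t => t - uniformQuantizer Δ t) a,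
      ← (uq_periodic Δ hΔ).intervalIntegral_add_eq (a + -(Δ/2)) 0]
    congr 1
    ring
  have hi : IntervalIntegrable (fun τ : ℝ => a + τ) volume (-(Δ/2)) (Δ/2) :=
    Continuous.intervalIntegrable (by fun_prop) _ _
  rw [intervalIntegral.integral_sub hi (uq_int Δ hΔ a)] at h1
  have h2 : ∫ τ in (-(Δ/2))..(Δ/2), (a + τ) = Δ * a := by
    rw [intervalIntegral.integral_add (by simp) (by simp)]
    simp
  linarith

lemma uq_main (Δ : ℝ) (hΔ : 0 < Δ) (a b : ℝ) (h : b ≤ a) :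
    ∫ τ, |uniformQuantizer Δ (a + τ) - uniformQuantizer Δ (b + τ)| ∂(uniformDither Δ)
      = |a - b| := by
  have h1 : ∀ τ, |uniformQuantizer Δ (a + τ) - uniformQuantizer Δ (b + τ)|
      = uniformQuantizer Δ (a + τ) - uniformQuantizer Δ (b + τ) := fun τ =>
    abs_of_nonneg (sub_nonneg.2 (uq_mono Δ hΔ (by linarith)))
  simp_rw [h1]
  rw [abs_of_nonneg (sub_nonneg.2 h), uniformDither, integral_smul_measure,
    integral_Icc_eq_integral_Ioc, ← intervalIntegral.integral_of_le (by linarith),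
    intervalIntegral.integral_sub (uq_int Δ hΔ a) (uq_int Δ hΔ b),
    uq_integral Δ hΔ a, uq_integral Δ hΔ b, ENNReal.toReal_inv, ENNReal.toReal_ofReal hΔ.le,
    smul_eq_mul]
  field_simp
  ring

/-- For `τ` uniform on `[-Δ/2, Δ/2]` and any `a, b ∈ ℝ`,
`E_τ[|Q_Δ(a+τ) - Q_Δ(b+τ)|] = |a - b|`. -/
theorem dithered_quantizer_l1_isometry (Δ : ℝ) (hΔ : 0 < Δ) (a b : ℝ) :
    ∫ τ, |uniformQuantizer Δ (a + τ) - uniformQuantizer Δ (b + τ)| ∂(uniformDither Δ)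
      = |a - b| := by
  rcases le_total b a with h | h
  · exact uq_main Δ hΔ a b h
  · rw [abs_sub_comm a b, ← uq_main Δ hΔ b a h]
    simp_rw [abs_sub_comm]
end

section
/- Let Δ > 0 and let τ be uniformly distributed on [-Δ/2, Δ/2]. Then for all a, b ∈ ℝ with |a| ≤ Δ/2 and |b| ≤ Δ/2, E_τ[(Δ/2)·|sgn(a+τ) - sgn(b+τ)|] = |a - b|. -/
open MeasureTheory

/-- For `τ` uniform on `[-Δ/2, Δ/2]` and `|a|, |b| ≤ Δ/2`,
`E_τ[(Δ/2)·|sgn(a+τ) - sgn(b+τ)|] = |a - b|`. -/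
theorem one_bit_l1_isometry (Δ : ℝ) (hΔ : 0 < Δ) (a b : ℝ)
    (ha : |a| ≤ Δ / 2) (hb : |b| ≤ Δ / 2) :
    ∫ τ, Δ / 2 * |Real.sign (a + τ) - Real.sign (b + τ)| ∂(uniformDither Δ) = |a - b| := by
  wlog hab : b ≤ a generalizing a b with H
  · have := H b a hb ha (le_of_not_ge hab)
    rw [abs_sub_comm a b, ← this]
    simp only [abs_sub_comm]
  have ha' := abs_le.mp ha
  have hb' := abs_le.mp hb
  unfold uniformDither
  rw [integral_smul_measure]
  have h1 : ∀ᵐ τ ∂(volume.restrict (Set.Icc (-(Δ / 2)) (Δ / 2))),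
      Δ / 2 * |Real.sign (a + τ) - Real.sign (b + τ)|
        = (Set.Ioc (-a) (-b)).indicator (fun _ => Δ) τ := by
    apply ae_restrict_of_ae
    have e1 : ∀ᵐ τ : ℝ, τ ≠ -a := Measure.ae_ne volume (-a)
    have e2 : ∀ᵐ τ : ℝ, τ ≠ -b := Measure.ae_ne volume (-b)
    filter_upwards [e1, e2] with τ h1 h2
    rcases lt_or_gt_of_ne h1 with h1 | h1 <;> rcases lt_or_gt_of_ne h2 with h2 | h2
    · rw [Real.sign_of_neg (by linarith), Real.sign_of_neg (by linarith),
        Set.indicator_of_notMem (by rintro ⟨h, h'⟩; linarith)]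
      simp
    · linarith
    · rw [Real.sign_of_pos (by linarith), Real.sign_of_neg (by linarith),
        Set.indicator_of_mem (show τ ∈ Set.Ioc (-a) (-b) from ⟨h1, h2.le⟩)]
      norm_num
    · rw [Real.sign_of_pos (by linarith), Real.sign_of_pos (by linarith),
        Set.indicator_of_notMem (by rintro ⟨h, h'⟩; linarith)]
      simp
  have hs : Set.Ioc (-a) (-b) ⊆ Set.Icc (-(Δ / 2)) (Δ / 2) :=
    fun x hx => ⟨by linarith [hx.1], by linarith [hx.2]⟩
  rw [integral_congr_ae h1, integral_indicator measurableSet_Ioc,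
    Measure.restrict_restrict measurableSet_Ioc,
    Set.inter_eq_left.mpr hs,
    setIntegral_const, Measure.real, Real.volume_Ioc, ENNReal.toReal_ofReal (by linarith),
    ENNReal.toReal_inv, ENNReal.toReal_ofReal hΔ.le, abs_of_nonneg (by linarith)]
  simp only [smul_eq_mul]
  field_simp
  ring
end
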